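/- Under the imsPADMM setup (see context), assume that at least one KKT point exists and that the operators Σ_f + S + σA*A and Σ_g + T + σB*B are positive definite. For (x, y, z) ∈ X × Y × Z, define D(x, y, z) := (dist(0, F(x,z)))² + (dist(0, G(y,z)))² + ‖A x + B y − c‖², where F(x,z) := { u + ∇f(x) + A* z : u ∈ X such that p(x') ≥ p(x) + ⟨u, x' − x⟩ for all x' ∈ X }, G(y,z) := { v + ∇g(y) + B* z : v ∈ Y such that q(y') ≥ q(y) + ⟨v, y' − y⟩ for all y' ∈ Y }, and dist denotes the metric infimum distance from the point 0 to the set. Then there exists a constant ω > 0 such that for every k ≥ 1, min_{1≤i≤k} D(x^{i+1}, y^{i+1}, z^{i+1}) ≤ ω / k, and moreover k · min_{1≤i≤k} D(x^{i+1}, y^{i+1}, z^{i+1}) → 0 as k → ∞. -/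

import Mathlib

/-!
The residual `D` is summable along the iterates; the running minimum of a summable nonnegative
sequence is both `O(1/k)` and `o(1/k)` (`running_min_rate`).

Write `P = Σ̂_f + S`, `Q = Σ̂_g + T`, and let `(x̄, ȳ, z̄)` be a KKT point. Both subproblems provide
explicit subgradients (`subgradient_of_prox_step`). Monotonicity of `∂p` and `∂q` between the new
iterate and the KKT point gives one descent inequality per block (`block_descent`), and the dual
update turns the coupling terms into telescoping ones (`dual_identity`), except for a multiple of
`⟪r^{k+1}, B Δy^k⟫`. That term is replaced by `(1 - τ) ⟪r^k, B Δy^k⟫` through monotonicity of `∂q`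
between two consecutive iterates (`consecutive_step_bound`); the gradient difference appearing there
is handled by cocoercivity and costs nothing beyond the telescoping term `‖Δy^{k-1}‖²_Q`. For `τ`
below the golden ratio the resulting form in `r` and `B Δy` is coercive up to a telescoping multiple
of `‖r‖²` (`golden_ratio_bound`). Hence the Lyapunov function
`Φ = ‖x - x̄‖²_P + ‖y - ȳ‖²_Q + σ‖B(y - ȳ)‖² + ‖z - z̄‖²/(τσ) + ‖Δy‖²_Q + ησ‖r‖²`
decreases, up to the inexactness, by a positive multiple of `‖r‖² + ‖B Δy‖²` plus
`‖Δx‖²` in `S + Σ_f/2` and `‖Δy‖²` in `T + Σ_g/2`.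

Since `M` and `N` are positive definite and `η > 0`, the distance to the solution is at most a
multiple of `√Φ`, so the errors enter as `e_k (√Φ_k + √Φ_{k+1})` with `e` summable; then `√Φ` stays
bounded and the decrements are summable (`summable_of_perturbed_descent`). As
`A Δx^k = r^k - r^{k+1} - B Δy^k`, definiteness of `Σ_f + S + σA*A` and `Σ_g + T + σB*B` makes `Δx`
and `Δy` square summable. The subgradients above yield elements of `F` and `G` that are linear in
`Δx`, `Δy`, `r`, the gradient differences and the errors; the gradients are Lipschitz
(`gradient_lipschitz`), so `D` is summable.
-/

open scoped RealInnerProductSpace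

/-! ### Convex analysis -/

section Blocks

variable {E : Type*} [NormedAddCommGroup E] [InnerProductSpace ℝ E]

/-- Fermat's rule for an inexact proximal step: testing along the segment from the minimizer and
letting its length tend to `0` removes the quadratic term. -/
lemma subgradient_of_prox_step (p : E → EReal)
    (hconv : ∀ x x' : E, ∀ t : ℝ, 0 ≤ t → t ≤ 1 →
      p (t • x + (1 - t) • x') ≤ (t : EReal) * p x + ((1 - t : ℝ) : EReal) * p x')
    (M : E →L[ℝ] E) (hM : ∀ u v : E, ⟪M u, v⟫ = ⟪u, M v⟫) (l d a : E)
    (hfin : p a ≠ ⊤ ∧ p a ≠ ⊥)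
    (hstep : ∀ xx : E,
      p a + (((1 / 2) * ⟪a, M a⟫ - ⟪l, a⟫ : ℝ) : EReal) + ((⟪d, xx - a⟫ : ℝ) : EReal)
        ≤ p xx + (((1 / 2) * ⟪xx, M xx⟫ - ⟪l, xx⟫ : ℝ) : EReal)) (xx : E) :
    p a + ((⟪l - M a + d, xx - a⟫ : ℝ) : EReal) ≤ p xx := by
  obtain ⟨pa, hpa⟩ : ∃ r : ℝ, p a = r := ⟨_, (EReal.coe_toReal hfin.1 hfin.2).symm⟩
  rw [hpa] at hstep ⊢
  induction hpx : p xx using EReal.rec with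
  | top => exact le_top
  | bot =>
    have h := hstep xx
    rw [hpx, EReal.bot_add, ← EReal.coe_add, ← EReal.coe_add] at h
    exact absurd (le_bot_iff.1 h) (EReal.coe_ne_bot _)
  | coe b =>
    rw [← EReal.coe_add, EReal.coe_le_coe_iff]
    have key : ∀ t : ℝ, 0 < t → t ≤ 1 →
        pa + ⟪l - M a + d, xx - a⟫ - b ≤ t * ((1 / 2) * ⟪xx - a, M (xx - a)⟫) := by
      intro t ht0 ht1
      have h1 := hstep (t • xx + (1 - t) • a)
      have h2 := hconv xx a t ht0.le ht1
      rw [hpx, hpa, ← EReal.coe_mul, ← EReal.coe_mul, ← EReal.coe_add] at h2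
      have h3 := h1.trans (add_le_add_left h2 _)
      simp only [← EReal.coe_add, EReal.coe_le_coe_iff] at h3
      have e : t • xx + (1 - t) • a = a + t • (xx - a) := by
        module
      rw [e] at h3
      generalize xx - a = h at h3 ⊢
      have hs := hM a h
      simp only [map_add, map_smul, inner_add_left, inner_add_right, inner_sub_left,
        real_inner_smul_left, real_inner_smul_right, add_sub_cancel_left] at h3 ⊢
      have hs2 : ⟪h, M a⟫ = ⟪a, M h⟫ := by rw [real_inner_comm]; exact hs
      rw [hs2] at h3
      rw [hs]
      refine le_of_mul_le_mul_left ?_ ht0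
      nlinarith
    by_contra hcon
    push Not at hcon
    set K := (1 / 2) * ⟪xx - a, M (xx - a)⟫
    set C := pa + ⟪l - M a + d, xx - a⟫ - b with hC
    have hCpos : 0 < C := by linarith
    have hD : 0 < 2 * (|K| + C) := by positivity
    have ht1 : C / (2 * (|K| + C)) ≤ 1 := by
      rw [div_le_one hD]; nlinarith [abs_nonneg K]
    have h := key (C / (2 * (|K| + C))) (by positivity) ht1
    have h' : C / (2 * (|K| + C)) * K ≤ C / (2 * (|K| + C)) * (|K| + C) := by
      apply mul_le_mul_of_nonneg_left _ (by positivity)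
      linarith [le_abs_self K]
    have h'' : C / (2 * (|K| + C)) * (|K| + C) = C / 2 := by
      have : |K| + C ≠ 0 := by positivity
      field_simp
    linarith

lemma subgradient_monotone (p : E → EReal) (a b u v : E)
    (ha : p a ≠ ⊤ ∧ p a ≠ ⊥) (hb : p b ≠ ⊤ ∧ p b ≠ ⊥)
    (hu : ∀ xx : E, p a + ((⟪u, xx - a⟫ : ℝ) : EReal) ≤ p xx)
    (hv : ∀ xx : E, p b + ((⟪v, xx - b⟫ : ℝ) : EReal) ≤ p xx) :
    0 ≤ ⟪u - v, a - b⟫ := by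
  obtain ⟨pa, hpa⟩ : ∃ r : ℝ, p a = r := ⟨_, (EReal.coe_toReal ha.1 ha.2).symm⟩
  obtain ⟨pb, hpb⟩ : ∃ r : ℝ, p b = r := ⟨_, (EReal.coe_toReal hb.1 hb.2).symm⟩
  have h1 := hu b
  have h2 := hv a
  rw [hpa, hpb, ← EReal.coe_add, EReal.coe_le_coe_iff] at h1 h2
  have e : ⟪u, b - a⟫ = - ⟪u, a - b⟫ := by rw [← inner_neg_right, neg_sub]
  rw [inner_sub_left]
  linarith

variable (f : E → ℝ) (G : E → E) (Hl Hu : E →L[ℝ] E)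

/-- Gradient step evaluated at the old point `a` but tested at the new point `a'`: the price of
the majorization is only `⟪a - a', Hu (a - a')⟫`, part of which is recovered from the strong
convexity modulus `Hl`. -/
lemma three_point_gradient (hsa : ∀ u v : E, ⟪Hl u, v⟫ = ⟪u, Hl v⟫)
    (hpsd : ∀ u : E, 0 ≤ ⟪u, Hl u⟫)
    (hlb : ∀ x x' : E, f x' + ⟪G x', x - x'⟫ + (1 / 2) * ⟪x - x', Hl (x - x')⟫ ≤ f x)
    (hub : ∀ x x' : E, f x ≤ f x' + ⟪G x', x - x'⟫ + (1 / 2) * ⟪x - x', Hu (x - x')⟫)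
    (a a' b : E) :
    (1 / 2) * ⟪a - a', Hl (a - a')⟫ - ⟪a - a', Hu (a - a')⟫ ≤ 2 * ⟪G a - G b, a' - b⟫ := by
  have h1 := hlb b a
  have h2 := hub a' a
  have h3 := hlb a' b
  have h4 := hpsd ((a - b) + (a' - b))
  have e1 : a - a' = (a - b) - (a' - b) := by abel
  have e2 : a' - a = (a' - b) - (a - b) := by abel
  have e3 : b - a = -(a - b) := by abel
  rw [e2] at h2
  rw [e3] at h1
  rw [e1]
  have s := hsa (a - b) (a' - b)
  rw [real_inner_comm] at s
  generalize a - b = m at *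
  generalize a' - b = n at *
  simp only [map_add, map_sub, map_neg, inner_add_left, inner_add_right, inner_sub_left,
    inner_sub_right, inner_neg_left, inner_neg_right] at *
  linarith

/-- Majorization form of the cocoercivity of a gradient. -/
lemma gradient_cocoercive (hpsd : ∀ u : E, 0 ≤ ⟪u, Hl u⟫)
    (hlb : ∀ x x' : E, f x' + ⟪G x', x - x'⟫ + (1 / 2) * ⟪x - x', Hl (x - x')⟫ ≤ f x)
    (hub : ∀ x x' : E, f x ≤ f x' + ⟪G x', x - x'⟫ + (1 / 2) * ⟪x - x', Hu (x - x')⟫)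
    (a b w : E) :
    -⟪G a - G b, w⟫ ≤ (1 / 2) * ⟪a - b - w, Hu (a - b - w)⟫ := by
  have h1 := hub (a - w) b
  have h2 := hlb (a - w) a
  have h3 := hlb a b
  have e1 : a - w - b = a - b - w := by abel
  have e2 : a - w - a = -w := by abel
  rw [e1] at h1
  rw [e2] at h2
  have p1 := hpsd (-w)
  have p2 := hpsd (a - b)
  have e3 : ⟪G b, a - b - w⟫ = ⟪G b, a - b⟫ - ⟪G b, w⟫ := inner_sub_right _ _ _
  rw [inner_neg_right] at h2
  rw [inner_sub_left]
  linarith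

lemma gradient_lipschitz (hpsd : ∀ u : E, 0 ≤ ⟪u, Hl u⟫)
    (hlb : ∀ x x' : E, f x' + ⟪G x', x - x'⟫ + (1 / 2) * ⟪x - x', Hl (x - x')⟫ ≤ f x)
    (hub : ∀ x x' : E, f x ≤ f x' + ⟪G x', x - x'⟫ + (1 / 2) * ⟪x - x', Hu (x - x')⟫) :
    ∃ L : ℝ, ∀ a b : E, ‖G a - G b‖ ≤ L * ‖a - b‖ := by
  set L := ‖Hu‖ + 1 with hL
  have hLpos : 0 < L := by positivity
  refine ⟨2 * L, fun a b => ?_⟩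
  -- the step `1 / (2 * L)` along the gradient difference maximizes the gain up to constants
  have h := gradient_cocoercive f G Hl Hu hpsd hlb hub a b (-((1 / (2 * L)) • (G a - G b)))
  set e := G a - G b
  set v := (1 / (2 * L)) • e with hv
  have hb : ⟪a - b + v, Hu (a - b + v)⟫ ≤ L * ‖a - b + v‖ ^ 2 := by
    calc _ ≤ ‖a - b + v‖ * ‖Hu (a - b + v)‖ := real_inner_le_norm _ _
      _ ≤ ‖a - b + v‖ * (‖Hu‖ * ‖a - b + v‖) := by gcongr; exact Hu.le_opNorm _
      _ ≤ ‖a - b + v‖ * (L * ‖a - b + v‖) := by gcongr; linarith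
      _ = _ := by ring
  have hp : ‖a - b + v‖ ^ 2 ≤ 2 * (‖a - b‖ ^ 2 + ‖v‖ ^ 2) := by
    have := parallelogram_law_with_norm ℝ (a - b) v
    nlinarith [sq_nonneg ‖a - b - v‖]
  have hvn : ‖v‖ ^ 2 = (1 / (2 * L)) ^ 2 * ‖e‖ ^ 2 := by
    rw [hv, norm_smul, mul_pow, Real.norm_eq_abs, sq_abs]
  have hi : ⟪e, v⟫ = 1 / (2 * L) * ‖e‖ ^ 2 := by
    rw [hv, real_inner_smul_right, real_inner_self_eq_norm_sq]
  rw [inner_neg_right, neg_neg, sub_neg_eq_add, hi] at h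
  have h2 : 1 / (2 * L) * ‖e‖ ^ 2 ≤ L * (‖a - b‖ ^ 2 + (1 / (2 * L)) ^ 2 * ‖e‖ ^ 2) := by
    rw [hvn] at hp
    nlinarith [mul_le_mul_of_nonneg_left hp hLpos.le]
  have h3 : L * (‖a - b‖ ^ 2 + (1 / (2 * L)) ^ 2 * ‖e‖ ^ 2)
      = L * ‖a - b‖ ^ 2 + 1 / (4 * L) * ‖e‖ ^ 2 := by field_simp; ring
  have h4 : 1 / (2 * L) * ‖e‖ ^ 2 = 2 * (1 / (4 * L) * ‖e‖ ^ 2) := by field_simp; ring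
  have h5 : 1 / (4 * L) * ‖e‖ ^ 2 ≤ L * ‖a - b‖ ^ 2 := by linarith
  refine abs_le_of_sq_le_sq' ?_ (by positivity) |>.2
  have h6 : ‖e‖ ^ 2 = (4 * L) * (1 / (4 * L) * ‖e‖ ^ 2) := by field_simp
  rw [h6]
  nlinarith [mul_le_mul_of_nonneg_left h5 (by positivity : (0:ℝ) ≤ 4 * L)]

/-- One block of the descent estimate: `d` is the inexactness and `m`, `mb` the
multiplier terms at the current iterate and at the solution `b`. -/
lemma block_descent (hsa : ∀ u v : E, ⟪Hl u, v⟫ = ⟪u, Hl v⟫)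
    (hpsd : ∀ u : E, 0 ≤ ⟪u, Hl u⟫)
    (husa : ∀ u v : E, ⟪Hu u, v⟫ = ⟪u, Hu v⟫)
    (hlb : ∀ x x' : E, f x' + ⟪G x', x - x'⟫ + (1 / 2) * ⟪x - x', Hl (x - x')⟫ ≤ f x)
    (hub : ∀ x x' : E, f x ≤ f x' + ⟪G x', x - x'⟫ + (1 / 2) * ⟪x - x', Hu (x - x')⟫)
    (S : E →L[ℝ] E) (hS : ∀ u v : E, ⟪S u, v⟫ = ⟪u, S v⟫)
    (a a' b m mb d : E)
    (hmono : 0 ≤ ⟪((Hu + S) (a - a') - G a - m + d) - (-G b - mb), a' - b⟫) :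
    ⟪a' - b, (Hu + S) (a' - b)⟫ + ⟪a - a', S (a - a')⟫ + (1 / 2) * ⟪a - a', Hl (a - a')⟫
      + 2 * ⟪m - mb, a' - b⟫ ≤ ⟪a - b, (Hu + S) (a - b)⟫ + 2 * ⟪d, a' - b⟫ := by
  have h := three_point_gradient f G Hl Hu hsa hpsd hlb hub a a' b
  have e1 : ((Hu + S) (a - a') - G a - m + d) - (-G b - mb)
      = (Hu + S) (a - a') - (G a - G b) - (m - mb) + d := by abel
  have e2 : a - b = (a - a') + (a' - b) := by abel
  rw [e1] at hmono
  rw [e2]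
  have s1 := husa (a - a') (a' - b)
  have s2 := hS (a - a') (a' - b)
  have s3 := real_inner_comm (a' - b) (Hu (a - a'))
  have s4 := real_inner_comm (a' - b) (S (a - a'))
  generalize a - a' = x at *
  generalize a' - b = w at *
  generalize G a - G b = γ at *
  generalize m - mb = μ at *
  simp only [map_add, add_apply, inner_add_left, inner_add_right,
    inner_sub_left] at *
  linarith

/-- Monotonicity between two consecutive steps of the second block; this is what makes dual
step lengths beyond `1` admissible. -/
lemma consecutive_step_bound (hpsd : ∀ u : E, 0 ≤ ⟪u, Hl u⟫)
    (husa : ∀ u v : E, ⟪Hu u, v⟫ = ⟪u, Hu v⟫)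
    (hlb : ∀ x x' : E, f x' + ⟪G x', x - x'⟫ + (1 / 2) * ⟪x - x', Hl (x - x')⟫ ≤ f x)
    (hub : ∀ x x' : E, f x ≤ f x' + ⟪G x', x - x'⟫ + (1 / 2) * ⟪x - x', Hu (x - x')⟫)
    (S : E →L[ℝ] E) (hS : ∀ u v : E, ⟪S u, v⟫ = ⟪u, S v⟫) (hSpsd : ∀ u : E, 0 ≤ ⟪u, S u⟫)
    (a₀ a₁ a₂ m₁ m₂ d₁ d₂ : E)
    (hmono : 0 ≤ ⟪((Hu + S) (a₁ - a₂) - G a₁ - m₂ + d₂)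
      - ((Hu + S) (a₀ - a₁) - G a₀ - m₁ + d₁), a₂ - a₁⟫) :
    ⟪a₁ - a₂, (Hu + S) (a₁ - a₂)⟫ - 2 * ⟪m₂ - m₁, a₁ - a₂⟫
      ≤ ⟪a₀ - a₁, (Hu + S) (a₀ - a₁)⟫ - 2 * ⟪d₂ - d₁, a₁ - a₂⟫ := by
  have h := gradient_cocoercive f G Hl Hu hpsd hlb hub a₀ a₁ (a₁ - a₂)
  have h2 := hSpsd (a₀ - a₁ - (a₁ - a₂))
  have e1 : ((Hu + S) (a₁ - a₂) - G a₁ - m₂ + d₂) - ((Hu + S) (a₀ - a₁) - G a₀ - m₁ + d₁)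
      = (Hu + S) (a₁ - a₂) - (Hu + S) (a₀ - a₁) + (G a₀ - G a₁) - (m₂ - m₁) + (d₂ - d₁) := by
    abel
  have e2 : a₂ - a₁ = -(a₁ - a₂) := by abel
  rw [e1, e2] at hmono
  have s1 := husa (a₀ - a₁) (a₁ - a₂)
  have s2 := hS (a₀ - a₁) (a₁ - a₂)
  have s3 := real_inner_comm (a₁ - a₂) (Hu (a₀ - a₁))
  have s4 := real_inner_comm (a₁ - a₂) (S (a₀ - a₁))
  have s5 := real_inner_comm (a₁ - a₂) (Hu (a₁ - a₂))
  have s6 := real_inner_comm (a₁ - a₂) (S (a₁ - a₂))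
  generalize a₁ - a₂ = w at *
  generalize a₀ - a₁ = x at *
  generalize G a₀ - G a₁ = γ at *
  generalize m₂ - m₁ = μ at *
  generalize d₂ - d₁ = κ at *
  simp only [map_sub, add_apply, inner_add_left, inner_add_right,
    inner_sub_left, inner_sub_right, inner_neg_right] at *
  linarith

lemma coercive_of_posDef [FiniteDimensional ℝ E] (H : E →L[ℝ] E)
    (hH : ∀ u : E, u ≠ 0 → 0 < ⟪u, H u⟫) :
    ∃ c : ℝ, 0 < c ∧ ∀ u : E, c * ‖u‖ ^ 2 ≤ ⟪u, H u⟫ := by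
  have hcomp : IsCompact (Metric.sphere (0 : E) 1) := isCompact_sphere _ _
  rcases (Metric.sphere (0 : E) 1).eq_empty_or_nonempty with he | hne
  · refine ⟨1, one_pos, fun u => ?_⟩
    by_cases hu : u = 0
    · simp [hu]
    · exfalso
      have : ‖u‖⁻¹ • u ∈ Metric.sphere (0 : E) 1 := by
        simp [norm_smul, hu]
      rw [he] at this
      exact this
  · obtain ⟨v, hv, hmin⟩ := hcomp.exists_isMinOn hne
      (f := fun u => ⟪u, H u⟫) (by fun_prop)
    have hv0 : v ≠ 0 := by
      rintro rfl
      simp at hv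
    refine ⟨⟪v, H v⟫, hH v hv0, fun u => ?_⟩
    by_cases hu : u = 0
    · simp [hu]
    · have hmem : ‖u‖⁻¹ • u ∈ Metric.sphere (0 : E) 1 := by
        simp [norm_smul, hu]
      have h := isMinOn_iff.1 hmin _ hmem
      simp only [map_smul, real_inner_smul_left, real_inner_smul_right] at h
      have hn : 0 < ‖u‖ := norm_pos_iff.2 hu
      calc _ ≤ (‖u‖⁻¹ * (‖u‖⁻¹ * ⟪u, H u⟫)) * ‖u‖ ^ 2 := by gcongr
        _ = _ := by field_simp

/-! ### Estimates in the constraint space -/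

/-- Telescoping form of the coupling terms of the two blocks: `ζ` and `b`, `b'` stand for the
errors of the multiplier and of `B y` before and after the step, `r` for the new residual, so
that `r - b'` is the error of `A x`. -/
lemma dual_identity (σ τ : ℝ) (hσ : 0 < σ) (hτ : 0 < τ) (ζ r b b' : E) :
    2 * ⟪ζ + σ • (r + (b - b')), r - b'⟫ + 2 * ⟪ζ + σ • r, b'⟫
      = (‖ζ + (τ * σ) • r‖ ^ 2 - ‖ζ‖ ^ 2) / (τ * σ) + (2 - τ) * σ * ‖r‖ ^ 2
        + 2 * σ * ⟪r, b - b'⟫ + σ * (‖b'‖ ^ 2 - ‖b‖ ^ 2 + ‖b - b'‖ ^ 2) := by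
  have c1 := real_inner_comm r ζ
  have c2 := real_inner_comm b b'
  have c3 := real_inner_comm r b
  have c4 := real_inner_comm r b'
  have hτσ : τ * σ ≠ 0 := by positivity
  simp only [← real_inner_self_eq_norm_sq, inner_add_left, inner_add_right, inner_sub_left,
    inner_sub_right, real_inner_smul_left, real_inner_smul_right]
  rw [c1, c2, c3, c4]
  field_simp
  ring

/-- The quadratic form governing the dual step is coercive up to a telescoping term as long as
`τ` is below the golden ratio, that is `1 + τ - τ² > 0`. -/
lemma golden_ratio_bound (τ : ℝ) (hτ0 : 0 < τ) (hτ1 : τ < (1 + Real.sqrt 5) / 2) :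
    ∃ η δ : ℝ, 0 < η ∧ 0 < δ ∧ ∀ r r' b : E,
      η * (‖r'‖ ^ 2 - ‖r‖ ^ 2) + δ * (‖r'‖ ^ 2 + ‖b‖ ^ 2)
        ≤ (2 - τ) * ‖r'‖ ^ 2 + ‖b‖ ^ 2 + 2 * (1 - τ) * ⟪r, b⟫ := by
  have hg : 0 < 1 + τ - τ ^ 2 := by
    have h5 : Real.sqrt 5 ^ 2 = 5 := Real.sq_sqrt (by norm_num)
    have h51 : 1 ≤ Real.sqrt 5 := Real.one_le_sqrt.2 (by norm_num)
    nlinarith [mul_pos (sub_pos.2 hτ1) (by linarith : 0 < τ + (1 + Real.sqrt 5) / 2 - 1)]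
  rcases le_total τ 1 with h | h
  · -- `1 - τ` telescopes; half of the remaining unit weight keeps `η` positive at `τ = 1`
    refine ⟨1 - τ + 1 / 2, min (1 / 2) τ, by linarith, by positivity, fun r r' b => ?_⟩
    have hc : -(‖r‖ ^ 2 + ‖b‖ ^ 2) ≤ 2 * ⟪r, b⟫ := by
      have := norm_add_sq_real r b
      nlinarith [sq_nonneg ‖r + b‖]
    have m1 := min_le_left (1 / 2) τ
    have m2 := min_le_right (1 / 2) τ
    have q1 := mul_le_mul_of_nonneg_right m1 (sq_nonneg ‖r'‖)
    have q2 := mul_le_mul_of_nonneg_right m2 (sq_nonneg ‖b‖)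
    nlinarith [mul_le_mul_of_nonneg_left hc (by linarith : 0 ≤ 1 - τ), sq_nonneg ‖r‖]
  · set θ := (1 + τ - τ ^ 2) / τ with hθ
    have hθ0 : 0 < θ := by positivity
    have hi : 1 / τ ≤ 1 := by rw [div_le_one hτ0]; exact h
    have hθe : θ = 1 - τ + 1 / τ := by rw [hθ]; field_simp; ring
    refine ⟨1 - 1 / τ + θ / 2, min (θ / 2) (1 + τ - τ ^ 2), by linarith, by positivity,
      fun r r' b => ?_⟩
    have hc : 2 * ⟪r, b⟫ ≤ 1 / τ * ‖r‖ ^ 2 + τ * ‖b‖ ^ 2 := by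
      have h1 := norm_sub_sq_real r (τ • b)
      rw [real_inner_smul_right, norm_smul, mul_pow, Real.norm_eq_abs, sq_abs] at h1
      have h2 : 0 ≤ 1 / τ * ‖r - τ • b‖ ^ 2 := by positivity
      rw [h1] at h2
      have h3 : 1 / τ * (‖r‖ ^ 2 - 2 * (τ * ⟪r, b⟫) + τ ^ 2 * ‖b‖ ^ 2)
        = 1 / τ * ‖r‖ ^ 2 - 2 * ⟪r, b⟫ + τ * ‖b‖ ^ 2 := by field_simp
      linarith
    have m1 := min_le_left (θ / 2) (1 + τ - τ ^ 2)
    have m2 := min_le_right (θ / 2) (1 + τ - τ ^ 2)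
    have q1 := mul_le_mul_of_nonneg_right m1 (sq_nonneg ‖r'‖)
    have q2 := mul_le_mul_of_nonneg_right m2 (sq_nonneg ‖b‖)
    have q3 := mul_le_mul_of_nonneg_left hc (by linarith : 0 ≤ τ - 1)
    have q4 : (τ - 1) * (1 / τ * ‖r‖ ^ 2 + τ * ‖b‖ ^ 2)
        = (1 - 1 / τ) * ‖r‖ ^ 2 + (τ ^ 2 - τ) * ‖b‖ ^ 2 := by field_simp
    have q5 : 0 ≤ θ / 2 * ‖r‖ ^ 2 := by positivity
    have q6 : (2 - τ) * ‖r'‖ ^ 2 = (1 - 1 / τ + θ) * ‖r'‖ ^ 2 := by rw [hθe]; ring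
    linarith

end Blocks

lemma abs_inner_le_of_norm_le {E : Type*} [NormedAddCommGroup E] [InnerProductSpace ℝ E]
    {d v : E} {L C e s : ℝ} (hd : ‖d‖ ≤ L * e) (hv : ‖v‖ ≤ C * s) :
    |⟪d, v⟫| ≤ (L * C) * e * s := by
  calc |⟪d, v⟫| ≤ ‖d‖ * ‖v‖ := abs_real_inner_le_norm _ _
    _ ≤ (L * e) * (C * s) :=
      mul_le_mul hd hv (norm_nonneg _) ((norm_nonneg _).trans hd)
    _ = _ := by ring

lemma infDist_zero_sq_le {E : Type*} [NormedAddCommGroup E] {s : Set E} {v : E} (hv : v ∈ s) :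
    Metric.infDist 0 s ^ 2 ≤ ‖v‖ ^ 2 := by
  refine pow_le_pow_left₀ Metric.infDist_nonneg ?_ 2
  simpa using Metric.infDist_le_dist_of_mem (x := 0) hv

/-! ### Real sequences -/

/-- Summable perturbations proportional to `√Φ` do not destroy a descent inequality: `√Φ` grows
by at most `e k` per step, hence stays bounded, and the decrements `w` are summable. -/
lemma summable_of_perturbed_descent (Φ w e : ℕ → ℝ) (hΦ : ∀ k, 0 ≤ Φ k) (hw : ∀ k, 0 ≤ w k)
    (he : ∀ k, 0 ≤ e k) (hes : Summable e)
    (h : ∀ k, Φ (k + 1) + w k ≤ Φ k + e k * (√(Φ k) + √(Φ (k + 1)))) : Summable w := by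
  have step : ∀ k, √(Φ (k + 1)) ≤ √(Φ k) + e k := by
    intro k
    by_contra hcon
    push Not at hcon
    have h0 := Real.sqrt_nonneg (Φ k)
    have h1 := Real.sq_sqrt (hΦ k)
    have h2 := Real.sq_sqrt (hΦ (k + 1))
    have hk := h k
    have hwk := hw k
    have hek := he k
    nlinarith
  have bound : ∀ k, √(Φ k) ≤ √(Φ 0) + ∑ i ∈ Finset.range k, e i := by
    intro k
    induction k with
    | zero => simp
    | succ k ih => rw [Finset.sum_range_succ]; linarith [step k]
  set K := √(Φ 0) + ∑' i, e i with hK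
  have hb : ∀ k, √(Φ k) ≤ K := fun k =>
    (bound k).trans (by rw [hK]; gcongr; exact hes.sum_le_tsum _ (fun i _ => he i))
  have hsum : ∀ k, Φ k + ∑ i ∈ Finset.range k, w i
      ≤ Φ 0 + (∑ i ∈ Finset.range k, e i) * (2 * K) := by
    intro k
    induction k with
    | zero => simp
    | succ k ih =>
      rw [Finset.sum_range_succ, Finset.sum_range_succ]
      have := mul_le_mul_of_nonneg_left (add_le_add (hb k) (hb (k + 1))) (he k)
      nlinarith [h k]
  have hK0 : 0 ≤ K := (Real.sqrt_nonneg _).trans (hb 0)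
  refine summable_of_sum_range_le (c := Φ 0 + (∑' i, e i) * (2 * K)) hw fun k => ?_
  have h1 : (∑ i ∈ Finset.range k, e i) * (2 * K) ≤ (∑' i, e i) * (2 * K) := by
    gcongr
    exact hes.sum_le_tsum _ (fun i _ => he i)
  linarith [hsum k, hΦ k]

/-- The running minimum of a summable nonnegative sequence is `O(1/k)` and `o(1/k)`: half of the
window `1..k` already contributes `(k/2) * min` to a tail of the series. -/
lemma running_min_rate (a : ℕ → ℝ) (ha : ∀ k, 0 ≤ a k) (hs : Summable fun k => a (k + 1)) :
    ∃ ω : ℝ, 0 < ω ∧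
      (∀ k : ℕ, 1 ≤ k → sInf (a '' {i : ℕ | 1 ≤ i ∧ i ≤ k}) ≤ ω / k) ∧
      Filter.Tendsto (fun k : ℕ => (k : ℝ) * sInf (a '' {i : ℕ | 1 ≤ i ∧ i ≤ k}))
        Filter.atTop (nhds 0) := by
  set m : ℕ → ℝ := fun k => sInf (a '' {i : ℕ | 1 ≤ i ∧ i ≤ k}) with hm
  have hle : ∀ k i, 1 ≤ i → i ≤ k → m k ≤ a i := fun k i h1 h2 =>
    csInf_le ⟨0, by rintro _ ⟨j, _, rfl⟩; exact ha j⟩ ⟨i, ⟨h1, h2⟩, rfl⟩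
  have hm0 : ∀ k, 0 ≤ m k := fun k =>
    Real.sInf_nonneg (by rintro _ ⟨j, _, rfl⟩; exact ha j)
  have hsum : ∀ k j, j ≤ k → ((k - j : ℕ) : ℝ) * m k ≤ ∑' i, a (i + j + 1) := by
    intro k j hjk
    have hsj : Summable fun i => a (i + j + 1) :=
      (summable_nat_add_iff (f := fun k => a (k + 1)) j).2 hs
    calc ((k - j : ℕ) : ℝ) * m k = ∑ i ∈ Finset.range (k - j), m k := by simp
      _ ≤ ∑ i ∈ Finset.range (k - j), a (i + j + 1) := by
        refine Finset.sum_le_sum fun i hi => hle _ _ (by omega) ?_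
        have := Finset.mem_range.1 hi
        omega
      _ ≤ _ := hsj.sum_le_tsum _ (fun i _ => ha _)
  have htail : Filter.Tendsto (fun j => ∑' i, a (i + j + 1)) Filter.atTop (nhds 0) :=
    tendsto_sum_nat_add fun k => a (k + 1)
  have hhalf : Filter.Tendsto (fun k : ℕ => k / 2) Filter.atTop Filter.atTop :=
    Nat.tendsto_div_const_atTop (by norm_num)
  have hT0 : 0 ≤ ∑' i, a (i + 1) := tsum_nonneg fun i => ha _
  refine ⟨∑' i, a (i + 1) + 1, by linarith, fun k hk => ?_, ?_⟩
  · have hk' : (0 : ℝ) < k := by exact_mod_cast hk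
    rw [le_div_iff₀ hk']
    have := hsum k 0 (by omega)
    simp only [Nat.sub_zero, add_zero] at this
    linarith
  · refine squeeze_zero (fun k => mul_nonneg (Nat.cast_nonneg k) (hm0 k)) (fun k => ?_)
      (by simpa using (htail.comp hhalf).const_mul 2)
    have h1 := hsum k (k / 2) (by omega)
    have h2 : (k : ℝ) ≤ 2 * ((k - k / 2 : ℕ) : ℝ) := by
      have : k ≤ 2 * (k - k / 2) := by omega
      exact_mod_cast this
    have h3 := mul_le_mul_of_nonneg_right h2 (hm0 k)
    change (k : ℝ) * m k ≤ 2 * ∑' i, a (i + k / 2 + 1)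
    linarith

section SquareSummable

variable {E F : Type*} [NormedAddCommGroup E] [NormedAddCommGroup F]

/-- Square-summable sequences of vectors. -/
def SqSummable (v : ℕ → E) : Prop := Summable fun k => ‖v k‖ ^ 2

lemma SqSummable.of_le {v : ℕ → E} {b : ℕ → ℝ} (hb : Summable b) (C : ℝ)
    (h : ∀ k, ‖v k‖ ^ 2 ≤ C * b k) : SqSummable v :=
  (hb.mul_left C).of_nonneg_of_le (fun _ => sq_nonneg _) h

lemma SqSummable.of_norm_le {v : ℕ → E} {u : ℕ → F} (hu : SqSummable u) (C : ℝ)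
    (h : ∀ k, ‖v k‖ ≤ C * ‖u k‖) : SqSummable v :=
  .of_le hu (C ^ 2) fun k => by
    rw [← mul_pow]; exact pow_le_pow_left₀ (norm_nonneg _) (h k) 2

variable [InnerProductSpace ℝ E] [InnerProductSpace ℝ F]

lemma SqSummable.add {u v : ℕ → E} (hu : SqSummable u) (hv : SqSummable v) :
    SqSummable fun k => u k + v k :=
  .of_le (Summable.add hu hv) 2 fun k => by
    have := parallelogram_law_with_norm ℝ (u k) (v k)
    nlinarith [sq_nonneg ‖u k - v k‖]

lemma SqSummable.clm {u : ℕ → E} (hu : SqSummable u) (L : E →L[ℝ] F) :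
    SqSummable fun k => L (u k) :=
  hu.of_norm_le ‖L‖ fun _ => L.le_opNorm _

lemma SqSummable.smul {u : ℕ → E} (hu : SqSummable u) (c : ℝ) :
    SqSummable fun k => c • u k :=
  hu.of_norm_le |c| fun _ => by rw [norm_smul, Real.norm_eq_abs]

lemma SqSummable.sub {u v : ℕ → E} (hu : SqSummable u) (hv : SqSummable v) :
    SqSummable fun k => u k - v k := by
  simpa [sub_eq_add_neg] using hu.add (hv.smul (-1))

end SquareSummable

/-! ### The convergence rate -/

set_option maxHeartbeats 1000000 in
/-- Theorem 2 of the paper: non-ergodic iteration complexity of the imsPADMM, measured by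
the KKT residual function
`D(x,y,z) = dist(0, F(x,z))² + dist(0, G(y,z))² + ‖Ax + By − c‖²`,
where `F(x,z) = ∂p(x) + ∇f(x) + A*z` and `G(y,z) = ∂q(y) + ∇g(y) + B*z`.
There is `ω > 0` with `min_{1≤i≤k} D(w^{i+1}) ≤ ω/k` and `k · min_{1≤i≤k} D(w^{i+1}) → 0`. -/
theorem stmt_16
    {X Y Z : Type*}
    [NormedAddCommGroup X] [InnerProductSpace ℝ X] [FiniteDimensional ℝ X]
    [NormedAddCommGroup Y] [InnerProductSpace ℝ Y] [FiniteDimensional ℝ Y]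
    [NormedAddCommGroup Z] [InnerProductSpace ℝ Z] [FiniteDimensional ℝ Z]
    (p : X → EReal) (q : Y → EReal)
    (hp_lsc : LowerSemicontinuous p) (hq_lsc : LowerSemicontinuous q)
    (hp_conv : ∀ x x' : X, ∀ t : ℝ, 0 ≤ t → t ≤ 1 →
      p (t • x + (1 - t) • x') ≤ (t : EReal) * p x + ((1 - t : ℝ) : EReal) * p x')
    (hq_conv : ∀ y y' : Y, ∀ t : ℝ, 0 ≤ t → t ≤ 1 →
      q (t • y + (1 - t) • y') ≤ (t : EReal) * q y + ((1 - t : ℝ) : EReal) * q y')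
    (f : X → ℝ) (g : Y → ℝ) (hf : Differentiable ℝ f) (hg : Differentiable ℝ g)
    (Sf Sfh : X →L[ℝ] X) (Sg Sgh : Y →L[ℝ] Y)
    (hSf_sa : ∀ u v : X, ⟪Sf u, v⟫ = ⟪u, Sf v⟫) (hSf_psd : ∀ u : X, 0 ≤ ⟪u, Sf u⟫)
    (hSfh_sa : ∀ u v : X, ⟪Sfh u, v⟫ = ⟪u, Sfh v⟫) (hSfh_psd : ∀ u : X, 0 ≤ ⟪u, Sfh u⟫)
    (hSg_sa : ∀ u v : Y, ⟪Sg u, v⟫ = ⟪u, Sg v⟫) (hSg_psd : ∀ u : Y, 0 ≤ ⟪u, Sg u⟫)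
    (hSgh_sa : ∀ u v : Y, ⟪Sgh u, v⟫ = ⟪u, Sgh v⟫) (hSgh_psd : ∀ u : Y, 0 ≤ ⟪u, Sgh u⟫)
    (hf_lb : ∀ x x' : X,
      f x' + ⟪gradient f x', x - x'⟫ + (1 / 2) * ⟪x - x', Sf (x - x')⟫ ≤ f x)
    (hf_ub : ∀ x x' : X,
      f x ≤ f x' + ⟪gradient f x', x - x'⟫ + (1 / 2) * ⟪x - x', Sfh (x - x')⟫)
    (hg_lb : ∀ y y' : Y,
      g y' + ⟪gradient g y', y - y'⟫ + (1 / 2) * ⟪y - y', Sg (y - y')⟫ ≤ g y)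
    (hg_ub : ∀ y y' : Y,
      g y ≤ g y' + ⟪gradient g y', y - y'⟫ + (1 / 2) * ⟪y - y', Sgh (y - y')⟫)
    (A : X →L[ℝ] Z) (B : Y →L[ℝ] Z) (c : Z) (σ τ : ℝ)
    (hσ : 0 < σ) (hτ0 : 0 < τ) (hτ1 : τ < (1 + Real.sqrt 5) / 2)
    (S : X →L[ℝ] X) (T : Y →L[ℝ] Y)
    (hS_sa : ∀ u v : X, ⟪S u, v⟫ = ⟪u, S v⟫) (hS_psd : ∀ u : X, 0 ≤ ⟪u, S u⟫)
    (hT_sa : ∀ u v : Y, ⟪T u, v⟫ = ⟪u, T v⟫) (hT_psd : ∀ u : Y, 0 ≤ ⟪u, T u⟫)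
    (M Msqrt Minvsqrt : X →L[ℝ] X) (N Nsqrt Ninvsqrt : Y →L[ℝ] Y)
    (hMdef : M = Sfh + S + σ • (ContinuousLinearMap.adjoint A ∘L A))
    (hNdef : N = Sgh + T + σ • (ContinuousLinearMap.adjoint B ∘L B))
    (hM_pos : ∀ u : X, u ≠ 0 → 0 < ⟪u, M u⟫)
    (hN_pos : ∀ u : Y, u ≠ 0 → 0 < ⟪u, N u⟫)
    (hMsqrt_sa : ∀ u v : X, ⟪Msqrt u, v⟫ = ⟪u, Msqrt v⟫)
    (hMsqrt_psd : ∀ u : X, 0 ≤ ⟪u, Msqrt u⟫)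
    (hMsqrt_sq : Msqrt ∘L Msqrt = M)
    (hMinv1 : Minvsqrt ∘L Msqrt = ContinuousLinearMap.id ℝ X)
    (hMinv2 : Msqrt ∘L Minvsqrt = ContinuousLinearMap.id ℝ X)
    (hNsqrt_sa : ∀ u v : Y, ⟪Nsqrt u, v⟫ = ⟪u, Nsqrt v⟫)
    (hNsqrt_psd : ∀ u : Y, 0 ≤ ⟪u, Nsqrt u⟫)
    (hNsqrt_sq : Nsqrt ∘L Nsqrt = N)
    (hNinv1 : Ninvsqrt ∘L Nsqrt = ContinuousLinearMap.id ℝ Y)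
    (hNinv2 : Nsqrt ∘L Ninvsqrt = ContinuousLinearMap.id ℝ Y)
    (ε : ℕ → ℝ) (hε0 : ∀ k, 0 ≤ ε k) (hεsum : Summable ε)
    (x : ℕ → X) (y : ℕ → Y) (z : ℕ → Z) (dx : ℕ → X) (dy : ℕ → Y)
    (lx : ℕ → X) (ly : ℕ → Y)
    (hlx : ∀ k, lx k = M (x k) - gradient f (x k) - ContinuousLinearMap.adjoint A (z k)
      - σ • ContinuousLinearMap.adjoint A (A (x k) + B (y k) - c))
    (hly : ∀ k, ly k = N (y k) - gradient g (y k) - ContinuousLinearMap.adjoint B (z k)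
      - σ • ContinuousLinearMap.adjoint B (A (x (k + 1)) + B (y k) - c))
    (hp_fin : ∀ k, p (x (k + 1)) ≠ ⊤ ∧ p (x (k + 1)) ≠ ⊥)
    (hq_fin : ∀ k, q (y (k + 1)) ≠ ⊤ ∧ q (y (k + 1)) ≠ ⊥)
    (hdx : ∀ k, ‖Minvsqrt (dx k)‖ ≤ ε k)
    (hdy : ∀ k, ‖Ninvsqrt (dy k)‖ ≤ ε k)
    (hxstep : ∀ k, ∀ xx : X,
      p (x (k + 1))
          + (((1 / 2) * ⟪x (k + 1), M (x (k + 1))⟫ - ⟪lx k, x (k + 1)⟫ : ℝ) : EReal)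
          + ((⟪dx k, xx - x (k + 1)⟫ : ℝ) : EReal)
        ≤ p xx + (((1 / 2) * ⟪xx, M xx⟫ - ⟪lx k, xx⟫ : ℝ) : EReal))
    (hystep : ∀ k, ∀ yy : Y,
      q (y (k + 1))
          + (((1 / 2) * ⟪y (k + 1), N (y (k + 1))⟫ - ⟪ly k, y (k + 1)⟫ : ℝ) : EReal)
          + ((⟪dy k, yy - y (k + 1)⟫ : ℝ) : EReal)
        ≤ q yy + (((1 / 2) * ⟪yy, N yy⟫ - ⟪ly k, yy⟫ : ℝ) : EReal))
    (hzstep : ∀ k, z (k + 1) = z k + (τ * σ) • (A (x (k + 1)) + B (y (k + 1)) - c))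
    (α αh β ρ : ℝ)
    (hα : α = (1 / 2) * (1 + τ / min (1 + τ) (1 + 1 / τ)))
    (hαh : αh = 1 - α * min τ (1 / τ))
    (hβ : β = min 1 (1 - τ + 1 / τ) * α - (1 - α) * τ)
    (hρ : ρ = min τ (1 + τ - τ ^ 2))
    (hkkt_exists : ∃ (xbar : X) (ybar : Y) (zbar : Z),
      A xbar + B ybar = c ∧ p xbar ≠ ⊤ ∧ p xbar ≠ ⊥ ∧ q ybar ≠ ⊤ ∧ q ybar ≠ ⊥ ∧
      (∀ xx : X,
        p xbar + ((⟪-gradient f xbar - ContinuousLinearMap.adjoint A zbar, xx - xbar⟫ : ℝ)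
          : EReal) ≤ p xx) ∧
      (∀ yy : Y,
        q ybar + ((⟪-gradient g ybar - ContinuousLinearMap.adjoint B zbar, yy - ybar⟫ : ℝ)
          : EReal) ≤ q yy))
    (hSf_pos : ∀ u : X, u ≠ 0 →
      0 < ⟪u, (Sf + S + σ • (ContinuousLinearMap.adjoint A ∘L A)) u⟫)
    (hSg_pos : ∀ u : Y, u ≠ 0 →
      0 < ⟪u, (Sg + T + σ • (ContinuousLinearMap.adjoint B ∘L B)) u⟫)
    (Dres : ℕ → ℝ)
    (hDres : ∀ k : ℕ, Dres k =
      (Metric.infDist (0 : X)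
          {w : X | ∃ u : X,
            (∀ xx : X, p (x k) + ((⟪u, xx - x k⟫ : ℝ) : EReal) ≤ p xx) ∧
            w = u + gradient f (x k) + ContinuousLinearMap.adjoint A (z k)}) ^ 2
        + (Metric.infDist (0 : Y)
          {w : Y | ∃ v : Y,
            (∀ yy : Y, q (y k) + ((⟪v, yy - y k⟫ : ℝ) : EReal) ≤ q yy) ∧
            w = v + gradient g (y k) + ContinuousLinearMap.adjoint B (z k)}) ^ 2
        + ‖A (x k) + B (y k) - c‖ ^ 2) :
    ∃ ω : ℝ, 0 < ω ∧
      (∀ k : ℕ, 1 ≤ k →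
        sInf ((fun i : ℕ => Dres (i + 1)) '' {i : ℕ | 1 ≤ i ∧ i ≤ k}) ≤ ω / k) ∧
      Filter.Tendsto
        (fun k : ℕ => (k : ℝ) * sInf ((fun i : ℕ => Dres (i + 1)) '' {i : ℕ | 1 ≤ i ∧ i ≤ k}))
        Filter.atTop (nhds 0) := by
  obtain ⟨xb, yb, zb, hfeas, hpb1, hpb2, hqb1, hqb2, hpb, hqb⟩ := hkkt_exists
  set As := ContinuousLinearMap.adjoint A with hAs
  set Bs := ContinuousLinearMap.adjoint B with hBs
  have hAadj : ∀ (w : Z) (v : X), ⟪As w, v⟫ = ⟪w, A v⟫ := fun w v =>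
    ContinuousLinearMap.adjoint_inner_left A v w
  have hBadj : ∀ (w : Z) (v : Y), ⟪Bs w, v⟫ = ⟪w, B v⟫ := fun w v =>
    ContinuousLinearMap.adjoint_inner_left B v w
  have hAA : ∀ v : X, ⟪v, As (A v)⟫ = ‖A v‖ ^ 2 := fun v => by
    rw [real_inner_comm, hAadj, real_inner_self_eq_norm_sq]
  have hBB : ∀ v : Y, ⟪v, Bs (B v)⟫ = ‖B v‖ ^ 2 := fun v => by
    rw [real_inner_comm, hBadj, real_inner_self_eq_norm_sq]
  have hM_sa : ∀ u v : X, ⟪M u, v⟫ = ⟪u, M v⟫ := fun u v => by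
    simp [← hMsqrt_sq, hMsqrt_sa]
  have hN_sa : ∀ u v : Y, ⟪N u, v⟫ = ⟪u, N v⟫ := fun u v => by
    simp [← hNsqrt_sq, hNsqrt_sa]
  obtain ⟨r, hr⟩ : ∃ r : ℕ → Z, ∀ k, r k = A (x k) + B (y k) - c := ⟨_, fun _ => rfl⟩
  -- subgradients produced by the two inexact proximal steps
  have hu : ∀ k, ∀ xx : X, p (x (k + 1)) + ((⟪(Sfh + S) (x k - x (k + 1)) - gradient f (x k)
      - As (z k + σ • (r (k + 1) + (B (y k - yb) - B (y (k + 1) - yb)))) + dx k,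
        xx - x (k + 1)⟫ : ℝ) : EReal) ≤ p xx := by
    intro k
    have h := subgradient_of_prox_step p hp_conv M hM_sa (lx k) (dx k) (x (k + 1)) (hp_fin k)
      (hxstep k)
    have e : lx k - M (x (k + 1)) + dx k = (Sfh + S) (x k - x (k + 1)) - gradient f (x k)
      - As (z k + σ • (r (k + 1) + (B (y k - yb) - B (y (k + 1) - yb)))) + dx k := by
      rw [hlx, hMdef, hr]
      simp only [map_add, map_sub, map_smul, add_apply, smul_apply,
        ContinuousLinearMap.comp_apply]
      module
    rwa [e] at h
  have hv : ∀ k, ∀ yy : Y, q (y (k + 1)) + ((⟪(Sgh + T) (y k - y (k + 1)) - gradient g (y k)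
      - Bs (z k + σ • r (k + 1)) + dy k, yy - y (k + 1)⟫ : ℝ) : EReal) ≤ q yy := by
    intro k
    have h := subgradient_of_prox_step q hq_conv N hN_sa (ly k) (dy k) (y (k + 1)) (hq_fin k)
      (hystep k)
    have e : ly k - N (y (k + 1)) + dy k = (Sgh + T) (y k - y (k + 1)) - gradient g (y k)
      - Bs (z k + σ • r (k + 1)) + dy k := by
      rw [hly, hNdef, hr]
      simp only [map_add, map_sub, map_smul, add_apply, smul_apply,
        ContinuousLinearMap.comp_apply]
      module
    rwa [e] at h
  have hz : ∀ k, z (k + 1) = z k + (τ * σ) • r (k + 1) := fun k => by rw [hzstep, hr]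
  have hrb : ∀ k, A (x k - xb) = r k - B (y k - yb) := fun k => by
    rw [hr, ← hfeas]; simp only [map_sub]; abel
  obtain ⟨η, δ, hη, hδ, hgold⟩ := golden_ratio_bound (E := Z) τ hτ0 hτ1
  -- `Φ k` is the Lyapunov function at the iterate `k + 1`; the last two terms absorb the
  -- consecutive-step estimate and the telescoping part of the dual estimate, and `w k` is the
  -- decrease obtained in the step from `k + 1` to `k + 2`.
  obtain ⟨Φ, hΦ⟩ : ∃ Φ : ℕ → ℝ, ∀ k, Φ k = ⟪x (k + 1) - xb, (Sfh + S) (x (k + 1) - xb)⟫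
      + ⟪y (k + 1) - yb, (Sgh + T) (y (k + 1) - yb)⟫ + σ * ‖B (y (k + 1) - yb)‖ ^ 2
      + ‖z (k + 1) - zb‖ ^ 2 / (τ * σ) + ⟪y k - y (k + 1), (Sgh + T) (y k - y (k + 1))⟫
      + η * σ * ‖r (k + 1)‖ ^ 2 := ⟨_, fun _ => rfl⟩
  obtain ⟨w, hw⟩ : ∃ w : ℕ → ℝ, ∀ k, w k =
      (⟪x (k + 1) - x (k + 2), S (x (k + 1) - x (k + 2))⟫
        + (1 / 2) * ⟪x (k + 1) - x (k + 2), Sf (x (k + 1) - x (k + 2))⟫)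
      + (⟪y (k + 1) - y (k + 2), T (y (k + 1) - y (k + 2))⟫
        + (1 / 2) * ⟪y (k + 1) - y (k + 2), Sg (y (k + 1) - y (k + 2))⟫)
      + σ * δ * (‖r (k + 2)‖ ^ 2 + ‖B (y (k + 1) - y (k + 2))‖ ^ 2) := ⟨_, fun _ => rfl⟩
  have hPpsd : ∀ u : X, 0 ≤ ⟪u, (Sfh + S) u⟫ := fun u => by
    rw [add_apply, inner_add_right]; exact add_nonneg (hSfh_psd u) (hS_psd u)
  have hQpsd : ∀ u : Y, 0 ≤ ⟪u, (Sgh + T) u⟫ := fun u => by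
    rw [add_apply, inner_add_right]; exact add_nonneg (hSgh_psd u) (hT_psd u)
  have hdesc : ∀ k, Φ (k + 1) + w k ≤ Φ k + 2 * ⟪dx (k + 1), x (k + 2) - xb⟫
      + 2 * ⟪dy (k + 1), y (k + 2) - yb⟫ - 2 * ⟪dy (k + 1) - dy k, y (k + 1) - y (k + 2)⟫ := by
    intro k
    have b1 := block_descent f (gradient f) Sf Sfh hSf_sa hSf_psd hSfh_sa hf_lb hf_ub S hS_sa
      _ _ _ _ _ _ (subgradient_monotone p _ xb _ _ (hp_fin (k + 1)) ⟨hpb1, hpb2⟩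
        (hu (k + 1)) hpb)
    have b2 := block_descent g (gradient g) Sg Sgh hSg_sa hSg_psd hSgh_sa hg_lb hg_ub T hT_sa
      _ _ _ _ _ _ (subgradient_monotone q _ yb _ _ (hq_fin (k + 1)) ⟨hqb1, hqb2⟩
        (hv (k + 1)) hqb)
    have b3 := consecutive_step_bound g (gradient g) Sg Sgh hSg_psd hSgh_sa hg_lb hg_ub T hT_sa
      hT_psd _ _ _ _ _ _ _ (subgradient_monotone q _ _ _ _ (hq_fin (k + 1)) (hq_fin k)
        (hv (k + 1)) (hv k))
    have b4 := dual_identity σ τ hσ hτ0 (z (k + 1) - zb) (r (k + 2)) (B (y (k + 1) - yb))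
      (B (y (k + 2) - yb))
    have b5 := hgold (r (k + 1)) (r (k + 2)) (B (y (k + 1) - y (k + 2)))
    have e1 : ∀ v : Z, z (k + 1) + v - zb = z (k + 1) - zb + v := fun v => by abel
    have e2 : z (k + 1) - zb + (τ * σ) • r (k + 2) = z (k + 2) - zb := by
      rw [hz (k + 1)]; abel
    have e3 : B (y (k + 1) - yb) - B (y (k + 2) - yb) = B (y (k + 1) - y (k + 2)) := by
      rw [← map_sub]; congr 1; abel
    have e4 : z (k + 1) + σ • r (k + 2) - (z k + σ • r (k + 1))
        = σ • (r (k + 2) - (1 - τ) • r (k + 1)) := by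
      rw [hz k]; module
    simp only [← map_sub As, ← map_sub Bs, hAadj, hBadj, show k + 1 + 1 = k + 2 from rfl,
      e1, e4, hrb (k + 2)] at b1 b2 b3
    rw [real_inner_smul_left, inner_sub_left (r (k + 2)), real_inner_smul_left] at b3
    rw [e2] at b4
    rw [e3] at b1 b4
    have b6 := mul_le_mul_of_nonneg_left b5 hσ.le
    rw [sub_div] at b4
    rw [hΦ, hΦ, hw]
    simp only [show k + 1 + 1 = k + 2 from rfl]
    linarith
  have hΦ0 : ∀ k, 0 ≤ Φ k := fun k => by
    rw [hΦ]
    have h1 := hPpsd (x (k + 1) - xb)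
    have h2 := hQpsd (y (k + 1) - yb)
    have h3 := hQpsd (y k - y (k + 1))
    positivity
  have hw0 : ∀ k, 0 ≤ w k := fun k => by
    rw [hw]
    have h1 := hS_psd (x (k + 1) - x (k + 2))
    have h2 := hSf_psd (x (k + 1) - x (k + 2))
    have h3 := hT_psd (y (k + 1) - y (k + 2))
    have h4 := hSg_psd (y (k + 1) - y (k + 2))
    positivity
  -- `√Φ` controls the distance to the solution: for `y` because `N` is definite, for `x`
  -- because `M` is and `A (x - xb) = r - B (y - yb)`.
  obtain ⟨C, hC0, hCx, hCy⟩ : ∃ C : ℝ, 0 ≤ C ∧ (∀ k, ‖x (k + 1) - xb‖ ≤ C * √(Φ k)) ∧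
      (∀ k, ‖y (k + 1) - yb‖ ≤ C * √(Φ k)) := by
    obtain ⟨cM, hcM, hM⟩ := coercive_of_posDef M hM_pos
    obtain ⟨cN, hcN, hN⟩ := coercive_of_posDef N hN_pos
    have hterms : ∀ k, ⟪x (k + 1) - xb, (Sfh + S) (x (k + 1) - xb)⟫ ≤ Φ k
        ∧ ⟪y (k + 1) - yb, (Sgh + T) (y (k + 1) - yb)⟫ + σ * ‖B (y (k + 1) - yb)‖ ^ 2 ≤ Φ k
        ∧ σ * ‖B (y (k + 1) - yb)‖ ^ 2 ≤ Φ k ∧ η * (σ * ‖r (k + 1)‖ ^ 2) ≤ Φ k := by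
      intro k
      have h1 := hPpsd (x (k + 1) - xb)
      have h2 := hQpsd (y (k + 1) - yb)
      have h3 := hQpsd (y k - y (k + 1))
      have h4 : 0 ≤ σ * ‖B (y (k + 1) - yb)‖ ^ 2 := by positivity
      have h5 : 0 ≤ ‖z (k + 1) - zb‖ ^ 2 / (τ * σ) := by positivity
      have h6 : 0 ≤ η * σ * ‖r (k + 1)‖ ^ 2 := by positivity
      rw [hΦ]
      refine ⟨?_, ?_, ?_, ?_⟩ <;> linarith
    have hsq : ∀ (a K F : ℝ), 0 ≤ a → 0 ≤ K → a ^ 2 ≤ K * F → a ≤ √K * √F := by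
      intro a K F ha hK h
      rw [← Real.sqrt_mul hK]
      exact Real.le_sqrt_of_sq_le h
    set K := (3 + 2 / η) / cM + 1 / cN with hK
    have hKx : (3 + 2 / η) / cM ≤ K := by rw [hK]; linarith [show 0 ≤ 1 / cN by positivity]
    have hKy : 1 / cN ≤ K := by rw [hK]; linarith [show 0 ≤ (3 + 2 / η) / cM by positivity]
    have hK0 : 0 ≤ K := by positivity
    refine ⟨√K, Real.sqrt_nonneg _, fun k => hsq _ _ _ (norm_nonneg _) hK0 ?_,
      fun k => hsq _ _ _ (norm_nonneg _) hK0 ?_⟩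
    · obtain ⟨t1, -, t3, t4⟩ := hterms k
      refine le_trans ?_ (mul_le_mul_of_nonneg_right hKx (hΦ0 k))
      have h1 := hM (x (k + 1) - xb)
      rw [hMdef, add_apply, smul_apply, inner_add_right, real_inner_smul_right,
        ContinuousLinearMap.comp_apply, hAA, hrb] at h1
      have h2 : ‖r (k + 1) - B (y (k + 1) - yb)‖ ^ 2
          ≤ 2 * ‖r (k + 1)‖ ^ 2 + 2 * ‖B (y (k + 1) - yb)‖ ^ 2 := by
        have := parallelogram_law_with_norm ℝ (r (k + 1)) (B (y (k + 1) - yb))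
        nlinarith [sq_nonneg ‖r (k + 1) + B (y (k + 1) - yb)‖]
      have h3 : σ * ‖r (k + 1)‖ ^ 2 ≤ Φ k / η := by
        rw [le_div_iff₀ hη]; linarith
      have h4 := mul_le_mul_of_nonneg_left h2 hσ.le
      rw [div_mul_eq_mul_div, le_div_iff₀ hcM]
      have h5 : (3 + 2 / η) * Φ k = 3 * Φ k + 2 * (Φ k / η) := by ring
      linarith
    · obtain ⟨-, t2, -, -⟩ := hterms k
      refine le_trans ?_ (mul_le_mul_of_nonneg_right hKy (hΦ0 k))
      have h1 := hN (y (k + 1) - yb)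
      rw [hNdef, add_apply, smul_apply, inner_add_right, real_inner_smul_right,
        ContinuousLinearMap.comp_apply, hBB] at h1
      rw [div_mul_eq_mul_div, le_div_iff₀ hcN]
      linarith
  obtain ⟨L, hL0, hLx, hLy⟩ : ∃ L : ℝ, 0 ≤ L ∧ (∀ k, ‖dx k‖ ≤ L * ε k) ∧
      (∀ k, ‖dy k‖ ≤ L * ε k) := by
    refine ⟨‖Msqrt‖ + ‖Nsqrt‖, by positivity, fun k => ?_, fun k => ?_⟩
    · have h : Msqrt (Minvsqrt (dx k)) = dx k := DFunLike.congr_fun hMinv2 (dx k)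
      rw [← h]
      refine (Msqrt.le_opNorm _).trans ?_
      have := hdx k
      gcongr
      linarith [norm_nonneg Nsqrt]
    · have h : Nsqrt (Ninvsqrt (dy k)) = dy k := DFunLike.congr_fun hNinv2 (dy k)
      rw [← h]
      refine (Nsqrt.le_opNorm _).trans ?_
      have := hdy k
      gcongr
      linarith [norm_nonneg Msqrt]
  have hε1 : Summable fun k => ε (k + 1) := (summable_nat_add_iff 1).2 hεsum
  have hwsum : Summable w := by
    refine summable_of_perturbed_descent Φ w (fun k => 6 * (L * C) * (ε k + ε (k + 1))) hΦ0 hw0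
      (fun k => by have := hε0 k; have := hε0 (k + 1); positivity)
      ((hεsum.add hε1).mul_left _) fun k => ?_
    set s := √(Φ k)
    set s' := √(Φ (k + 1))
    have hs : 0 ≤ s := Real.sqrt_nonneg _
    have hs' : 0 ≤ s' := Real.sqrt_nonneg _
    have h0 := hε0 k
    have h1 := hε0 (k + 1)
    have hx2 := hCx (k + 1)
    have hy2 := hCy (k + 1)
    have hyy : ‖y (k + 1) - y (k + 2)‖ ≤ C * (s + s') := by
      rw [← sub_sub_sub_cancel_right _ _ yb]
      refine (norm_sub_le _ _).trans ?_
      linarith [hCy k]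
    have hdd : ‖dy (k + 1) - dy k‖ ≤ L * (ε k + ε (k + 1)) := by
      refine (norm_sub_le _ _).trans ?_
      linarith [hLy k, hLy (k + 1)]
    have i1 := abs_inner_le_of_norm_le (d := dx (k + 1)) (v := x (k + 2) - xb)
      (e := ε k + ε (k + 1)) (s := s + s')
      ((hLx (k + 1)).trans (by gcongr; linarith)) (hx2.trans (by gcongr; linarith))
    have i2 := abs_inner_le_of_norm_le (d := dy (k + 1)) (v := y (k + 2) - yb)
      (e := ε k + ε (k + 1)) (s := s + s')
      ((hLy (k + 1)).trans (by gcongr; linarith)) (hy2.trans (by gcongr; linarith))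
    have i3 := abs_inner_le_of_norm_le hdd hyy
    have j1 := (abs_le.1 i1).2
    have j2 := (abs_le.1 i2).2
    have j3 := (abs_le.1 i3).1
    linarith [hdesc k]
  have hrs2 : SqSummable fun k => r (k + 2) := by
    refine .of_le hwsum (1 / (σ * δ)) fun k => ?_
    rw [one_div_mul_eq_div, le_div_iff₀ (by positivity), hw]
    have h1 := hS_psd (x (k + 1) - x (k + 2))
    have h2 := hSf_psd (x (k + 1) - x (k + 2))
    have h3 := hT_psd (y (k + 1) - y (k + 2))
    have h4 := hSg_psd (y (k + 1) - y (k + 2))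
    have h5 : 0 ≤ σ * δ * ‖B (y (k + 1) - y (k + 2))‖ ^ 2 := by positivity
    linarith
  have hrs1 : SqSummable fun k => r (k + 1) :=
    (summable_nat_add_iff (f := fun k => ‖r (k + 1)‖ ^ 2) 1).1 hrs2
  have hBs2 : SqSummable fun k => B (y (k + 1) - y (k + 2)) := by
    refine .of_le hwsum (1 / (σ * δ)) fun k => ?_
    rw [one_div_mul_eq_div, le_div_iff₀ (by positivity), hw]
    have h1 := hS_psd (x (k + 1) - x (k + 2))
    have h2 := hSf_psd (x (k + 1) - x (k + 2))
    have h3 := hT_psd (y (k + 1) - y (k + 2))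
    have h4 := hSg_psd (y (k + 1) - y (k + 2))
    have h5 : 0 ≤ σ * δ * ‖r (k + 2)‖ ^ 2 := by positivity
    linarith
  -- the decrement sees `A Δx` only through `A Δx = r - r' - B Δy`
  have hAs2 : SqSummable fun k => A (x (k + 1) - x (k + 2)) := by
    have e : (fun k => A (x (k + 1) - x (k + 2)))
        = fun k => r (k + 1) - r (k + 2) - B (y (k + 1) - y (k + 2)) := by
      funext k
      rw [hr, hr, map_sub, map_sub]
      abel
    rw [e]
    exact (hrs1.sub hrs2).sub hBs2
  have hxs : SqSummable fun k => x (k + 1) - x (k + 2) := by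
    obtain ⟨cf, hcf, hcoer⟩ := coercive_of_posDef _ hSf_pos
    refine .of_le ((hwsum.mul_left 2).add (Summable.mul_left σ hAs2)) (1 / cf) fun k => ?_
    rw [one_div_mul_eq_div, le_div_iff₀ hcf, hw]
    have h := hcoer (x (k + 1) - x (k + 2))
    simp only [add_apply, smul_apply, inner_add_right, real_inner_smul_right,
      ContinuousLinearMap.comp_apply, hAA] at h
    have h1 := hS_psd (x (k + 1) - x (k + 2))
    have h3 := hT_psd (y (k + 1) - y (k + 2))
    have h4 := hSg_psd (y (k + 1) - y (k + 2))
    have h5 : 0 ≤ σ * δ * (‖r (k + 2)‖ ^ 2 + ‖B (y (k + 1) - y (k + 2))‖ ^ 2) := by positivity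
    linarith
  have hys : SqSummable fun k => y (k + 1) - y (k + 2) := by
    obtain ⟨cg, hcg, hcoer⟩ := coercive_of_posDef _ hSg_pos
    refine .of_le ((hwsum.mul_left 2).add (Summable.mul_left σ hBs2)) (1 / cg) fun k => ?_
    rw [one_div_mul_eq_div, le_div_iff₀ hcg, hw]
    have h := hcoer (y (k + 1) - y (k + 2))
    simp only [add_apply, smul_apply, inner_add_right, real_inner_smul_right,
      ContinuousLinearMap.comp_apply, hBB] at h
    have h1 := hS_psd (x (k + 1) - x (k + 2))
    have h2 := hSf_psd (x (k + 1) - x (k + 2))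
    have h3 := hT_psd (y (k + 1) - y (k + 2))
    have h5 : 0 ≤ σ * δ * (‖r (k + 2)‖ ^ 2 + ‖B (y (k + 1) - y (k + 2))‖ ^ 2) := by positivity
    linarith
  have hεsq : SqSummable fun k => ε (k + 1) := by
    refine .of_le hε1 (∑' k, ε k) fun k => ?_
    rw [Real.norm_of_nonneg (hε0 _), sq]
    exact mul_le_mul_of_nonneg_right (hεsum.le_tsum _ fun j _ => hε0 j) (hε0 _)
  have hdxs : SqSummable fun k => dx (k + 1) := hεsq.of_norm_le L fun k => by
    rw [Real.norm_of_nonneg (hε0 (k + 1))]; exact hLx _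
  have hdys : SqSummable fun k => dy (k + 1) := hεsq.of_norm_le L fun k => by
    rw [Real.norm_of_nonneg (hε0 (k + 1))]; exact hLy _
  obtain ⟨Lf, hLf⟩ := gradient_lipschitz f (gradient f) Sf Sfh hSf_psd hf_lb hf_ub
  obtain ⟨Lg, hLg⟩ := gradient_lipschitz g (gradient g) Sg Sgh hSg_psd hg_lb hg_ub
  have hexs : SqSummable fun k => (Sfh + S) (x (k + 1) - x (k + 2))
      - (gradient f (x (k + 1)) - gradient f (x (k + 2)))
      - As (σ • (r (k + 2) + B (y (k + 1) - y (k + 2)))) + As ((τ * σ) • r (k + 2))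
      + dx (k + 1) :=
    ((((hxs.clm _).sub (hxs.of_norm_le Lf fun k => hLf _ _)).sub
      (((hrs2.add hBs2).smul σ).clm As)).add ((hrs2.smul (τ * σ)).clm As)).add hdxs
  have heys : SqSummable fun k => (Sgh + T) (y (k + 1) - y (k + 2))
      - (gradient g (y (k + 1)) - gradient g (y (k + 2)))
      - Bs (σ • r (k + 2)) + Bs ((τ * σ) • r (k + 2)) + dy (k + 1) :=
    ((((hys.clm _).sub (hys.of_norm_le Lg fun k => hLg _ _)).sub
      ((hrs2.smul σ).clm Bs)).add ((hrs2.smul (τ * σ)).clm Bs)).add hdys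
  have hDsum : Summable fun k => Dres (k + 2) := by
    refine ((Summable.add hexs heys).add hrs2).of_nonneg_of_le
      (fun k => by rw [hDres]; positivity) fun k => ?_
    rw [hDres, ← hr]
    refine add_le_add (add_le_add ?_ ?_) le_rfl
    · refine infDist_zero_sq_le ⟨_, hu (k + 1), ?_⟩
      rw [hz (k + 1)]
      simp only [show k + 1 + 1 = k + 2 from rfl, map_add, map_sub, map_smul]
      module
    · refine infDist_zero_sq_le ⟨_, hv (k + 1), ?_⟩
      rw [hz (k + 1)]
      simp only [show k + 1 + 1 = k + 2 from rfl, map_add, map_sub, map_smul]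
      module
  exact running_min_rate (fun i => Dres (i + 1))
    (fun k => by simp only [hDres]; positivity) hDsum
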